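/- arXiv:1705.07193 — 2 statements merged into one kernel-verified Lean document; each statement's English description precedes it below -/
import Mathlib

section
/- Let N be a positive integer, let f : ℕ → ℂ be arbitrary, and let g : ℕ → ℂ be a truncated divisor sum g(m) = Σ_{q | m, q ≤ Q} g'(q) for some fixed Q, with finite Ramanujan expansion g(m) = Σ_{q ≤ Q} 𝑔̂(q)·c_q(m). Then for every positive integer ℓ the limit lim_{x→∞} (1/x)·Σ_{h ≤ x} C_{f,g}(N,h)·c_ℓ(h) exists and equals 𝑔̂(ℓ)·Σ_{n ≤ N} f(n)·c_ℓ(n). -/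
/-- The Ramanujan sum `c_q(n) = ∑_{d ∣ gcd(q,n)} d · μ(q/d)`. -/
def ramanujanSum (q : ℕ) (n : ℤ) : ℤ :=
  ∑ d ∈ (Nat.gcd q n.natAbs).divisors, (d : ℤ) * ArithmeticFunction.moebius (q / d)

/-!
By linearity only the mean over `h` of `c_ℓ(h)` along the progression `h ≡ -n (mod q)` matters.
Since `c_ℓ = ∑_{d ∣ ℓ} μ(ℓ/d) · d · 1_{d ∣ ·}`, and the density of the `h` with `q ∣ n + h` and
`d ∣ h` is `1 / lcm(d, q)` if `gcd(d, q) ∣ n` and `0` otherwise, this mean is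
`q⁻¹ ∑_{d ∣ ℓ} μ(ℓ/d) F(gcd(d, q))` with `F(e) = e · 1_{e ∣ n}`. By Möbius inversion the sum is
`c_ℓ(n)` if `ℓ ∣ q` and vanishes otherwise, which singles out the terms of `ĝ(ℓ)`.
-/

open Filter Finset ArithmeticFunction
open scoped ArithmeticFunction.Moebius Topology

/-- `u` has mean value `a`: the averages of `u 1, …, u x` tend to `a`. The value `u 0` is
irrelevant. -/
def HasMeanValue {E : Type*} [AddCommMonoid E] [Module ℝ E] [TopologicalSpace E]
    (u : ℕ → E) (a : E) : Prop :=
  Tendsto (fun x : ℕ => (x : ℝ)⁻¹ • ∑ h ∈ Icc 1 x, u h) atTop (𝓝 a)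

namespace HasMeanValue

variable {E : Type*} [AddCommMonoid E] [Module ℝ E] [TopologicalSpace E]

lemma congr {u v : ℕ → E} {a : E} (hu : HasMeanValue u a) (huv : ∀ h, 0 < h → u h = v h) :
    HasMeanValue v a :=
  Tendsto.congr (fun _ => by rw [sum_congr rfl fun h hh => huv h (mem_Icc.1 hh).1]) hu

lemma sum [ContinuousAdd E] {ι : Type*} {s : Finset ι} {u : ι → ℕ → E} {a : ι → E}
    (hu : ∀ i ∈ s, HasMeanValue (u i) (a i)) :
    HasMeanValue (fun h => ∑ i ∈ s, u i h) (∑ i ∈ s, a i) :=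
  (tendsto_finsetSum s hu).congr fun x => by rw [← smul_sum, sum_comm]

lemma smul_const [ContinuousSMul ℝ E] {u : ℕ → ℝ} {a : ℝ} (hu : HasMeanValue u a) (v : E) :
    HasMeanValue (fun h => u h • v) (a • v) :=
  (Tendsto.smul_const hu v).congr fun x => by rw [smul_assoc, sum_smul]

lemma const_mul {A : Type*} [Semiring A] [Algebra ℝ A] [TopologicalSpace A]
    [SeparatelyContinuousMul A] {u : ℕ → A} {a : A} (hu : HasMeanValue u a) (c : A) :
    HasMeanValue (fun h => c * u h) (c * a) :=
  (Tendsto.const_mul c hu).congr fun x => by rw [mul_smul_comm, mul_sum]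

end HasMeanValue

lemma abs_card_Icc_filter_modEq_sub_le {r : ℕ} (hr : 0 < r) (v x : ℕ) :
    |(#{h ∈ Icc 1 x | h ≡ v [MOD r]} : ℝ) - x / r| ≤ 1 := by
  suffices |(#{h ∈ Ioc 0 x | h ≡ v [MOD r]} : ℚ) - x / r| ≤ 1 by
    rw [← zero_add 1, Icc_add_one_left_eq_Ioc]
    simpa only [Rat.cast_abs, Rat.cast_sub, Rat.cast_div, Rat.cast_natCast, Rat.cast_one] using
      (Rat.cast_le (K := ℝ)).2 this
  have floor_le_floor : ⌊((0 : ℕ) - v : ℚ) / r⌋ ≤ ⌊(x - v : ℚ) / r⌋ := by gcongr; simp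
  have card_eq : (#{h ∈ Ioc 0 x | h ≡ v [MOD r]} : ℚ) =
      ⌊(x - v : ℚ) / r⌋ - ⌊((0 : ℕ) - v : ℚ) / r⌋ := by
    have card_eq_max := Nat.Ioc_filter_modEq_card 0 x hr v
    rw [max_eq_left (sub_nonneg.2 floor_le_floor)] at card_eq_max
    exact_mod_cast card_eq_max
  have div_eq : (x : ℚ) / r = (x - v) / r - ((0 : ℕ) - v) / r := by push_cast; ring
  rw [card_eq, div_eq, sub_sub_sub_comm, abs_le]
  constructor <;>
    linarith [Int.floor_le ((x - v : ℚ) / r), Int.lt_floor_add_one ((x - v : ℚ) / r),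
      Int.floor_le (((0 : ℕ) - v : ℚ) / r), Int.lt_floor_add_one (((0 : ℕ) - v : ℚ) / r)]

lemma hasMeanValue_modEq {r : ℕ} (hr : 0 < r) (v : ℕ) :
    HasMeanValue (fun h => if h ≡ v [MOD r] then (1 : ℝ) else 0) (r : ℝ)⁻¹ := by
  refine tendsto_iff_norm_sub_tendsto_zero.2 <| squeeze_zero' (.of_forall fun _ => norm_nonneg _) ?_
    tendsto_inv_atTop_nhds_zero_nat
  filter_upwards [eventually_gt_atTop 0] with x hx_pos
  have hx : (x : ℝ) ≠ 0 := by positivity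
  have error_eq : (x : ℝ)⁻¹ • (∑ h ∈ Icc 1 x, if h ≡ v [MOD r] then (1 : ℝ) else 0) - (r : ℝ)⁻¹ =
      (x : ℝ)⁻¹ * (#{h ∈ Icc 1 x | h ≡ v [MOD r]} - x / r) := by
    rw [sum_boole, smul_eq_mul, mul_sub, mul_div, inv_mul_cancel₀ hx, one_div]
  rw [error_eq, norm_mul, norm_inv, Real.norm_natCast, Real.norm_eq_abs]
  exact mul_le_of_le_one_right (by positivity) (abs_card_Icc_filter_modEq_sub_le hr v x)

lemma exists_dvd_add_and_dvd {d q n : ℕ} (hq : 0 < q) (hn : d.gcd q ∣ n) :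
    ∃ v, q ∣ n + v ∧ d ∣ v := by
  have compatible : 0 ≡ n * (q - 1) [MOD d.gcd q] :=
    (Nat.modEq_zero_iff_dvd.2 (hn.mul_right _)).symm
  obtain ⟨v, hvd, hvq⟩ := Nat.chineseRemainder' compatible
  refine ⟨v, ?_, Nat.modEq_zero_iff_dvd.1 hvd⟩
  have hnq : n + n * (q - 1) = n * q := by
    rw [← mul_one_add, Nat.add_sub_of_le (show 1 ≤ q from hq)]
  exact ((hvq.add_left n).dvd_iff dvd_rfl).2 (hnq ▸ dvd_mul_left q n)

lemma dvd_add_and_dvd_iff_modEq_lcm {d q n v : ℕ} (hqv : q ∣ n + v) (hdv : d ∣ v) (h : ℕ) :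
    q ∣ n + h ∧ d ∣ h ↔ h ≡ v [MOD d.lcm q] := by
  refine ⟨fun ⟨hqh, hdh⟩ => ?_, fun hmod => ⟨?_, ?_⟩⟩
  · have mod_d : h ≡ v [MOD d] := hdh.modEq_zero_nat.trans hdv.modEq_zero_nat.symm
    have mod_q : h ≡ v [MOD q] :=
      (hqh.modEq_zero_nat.trans hqv.modEq_zero_nat.symm).add_left_cancel'
    rw [← Int.natCast_modEq_iff] at mod_d mod_q ⊢
    exact Int.modEq_and_modEq_iff_modEq_lcm.1 ⟨mod_d, mod_q⟩
  · exact (((hmod.of_dvd (Nat.dvd_lcm_right d q)).add_left n).dvd_iff dvd_rfl).2 hqv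
  · exact ((hmod.of_dvd (Nat.dvd_lcm_left d q)).dvd_iff dvd_rfl).2 hdv

lemma hasMeanValue_dvd_add_and_dvd {d q : ℕ} (hd : 0 < d) (hq : 0 < q) (n : ℕ) :
    HasMeanValue (fun h => if q ∣ n + h ∧ d ∣ h then (1 : ℝ) else 0)
      (if d.gcd q ∣ n then (d.lcm q : ℝ)⁻¹ else 0) := by
  split_ifs with hn
  · obtain ⟨v, hqv, hdv⟩ := exists_dvd_add_and_dvd hq hn
    simp_rw [dvd_add_and_dvd_iff_modEq_lcm hqv hdv]
    exact hasMeanValue_modEq (Nat.lcm_pos hd hq) v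
  · have no_solution (h : ℕ) : ¬(q ∣ n + h ∧ d ∣ h) := fun ⟨hqh, hdh⟩ =>
      hn <| (Nat.dvd_add_left ((Nat.gcd_dvd_left d q).trans hdh)).1
        ((Nat.gcd_dvd_right d q).trans hqh)
    simp [HasMeanValue, no_solution]

lemma sum_moebius_smul_gcd {M : Type*} [AddCommGroup M] (F : ℕ → M) {q ℓ : ℕ} (hq : 0 < q)
    (hℓ : 0 < ℓ) :
    ∑ x ∈ ℓ.divisorsAntidiagonal, μ x.1 • F (x.2.gcd q) =
      if ℓ ∣ q then ∑ x ∈ ℓ.divisorsAntidiagonal, μ x.1 • F x.2 else 0 := by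
  let F' : ℕ → M := fun m => ∑ x ∈ m.divisorsAntidiagonal, μ x.1 • F x.2
  have sum_F' : ∀ m > 0, ∑ i ∈ m.divisors, F' i = F m :=
    sum_eq_iff_sum_smul_moebius_eq.2 fun _ _ => rfl
  have sum_ite_F' : ∀ m > 0, ∑ i ∈ m.divisors, (if i ∣ q then F' i else 0) = F (m.gcd q) := by
    intro m hm
    have divisors_gcd : (m.gcd q).divisors = {i ∈ m.divisors | i ∣ q} := by
      ext i
      simp [Nat.dvd_gcd_iff, hm.ne', hq.ne']
    rw [← sum_F' _ (Nat.gcd_pos_of_pos_right _ hq), divisors_gcd, sum_filter]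
  exact sum_eq_iff_sum_smul_moebius_eq.1 sum_ite_F' ℓ hℓ

lemma ramanujanSum_eq_sum_divisorsAntidiagonal {ℓ : ℕ} (hℓ : 0 < ℓ) (n : ℕ) :
    (ramanujanSum ℓ n : ℝ) =
      ∑ x ∈ ℓ.divisorsAntidiagonal, μ x.1 • if x.2 ∣ n then (x.2 : ℝ) else 0 := by
  have divisors_gcd : (ℓ.gcd n).divisors = {d ∈ ℓ.divisors | d ∣ n} := by
    ext d
    simp [Nat.dvd_gcd_iff, hℓ.ne']
  rw [Nat.sum_divisorsAntidiagonal' fun a d => μ a • if d ∣ n then (d : ℝ) else 0]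
  simp [ramanujanSum, divisors_gcd, sum_filter, mul_comm]

lemma sum_moebius_mul_inv_lcm {q ℓ : ℕ} (hq : 0 < q) (hℓ : 0 < ℓ) (n : ℕ) :
    ∑ x ∈ ℓ.divisorsAntidiagonal,
        (μ x.1 * x.2 : ℝ) * (if x.2.gcd q ∣ n then (x.2.lcm q : ℝ)⁻¹ else 0) =
      if ℓ ∣ q then (q : ℝ)⁻¹ * ramanujanSum ℓ n else 0 := by
  have moebius_gcd := sum_moebius_smul_gcd (fun e => if e ∣ n then (e : ℝ) else 0) hq hℓ
  rw [← ramanujanSum_eq_sum_divisorsAntidiagonal hℓ] at moebius_gcd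
  rw [← mul_ite_zero, ← moebius_gcd, mul_sum]
  refine sum_congr rfl fun x hx => ?_
  have hd : 0 < x.2 := Nat.pos_of_mem_divisors (Nat.snd_mem_divisors_of_mem_antidiagonal hx)
  have mul_inv_lcm : (x.2 * (x.2.lcm q : ℝ)⁻¹ : ℝ) = (q : ℝ)⁻¹ * x.2.gcd q := by
    have hlcm : (x.2.lcm q : ℝ) ≠ 0 := by exact_mod_cast (Nat.lcm_pos hd hq).ne'
    have gcd_mul_lcm : (x.2.gcd q * x.2.lcm q : ℝ) = x.2 * q := by
      exact_mod_cast Nat.gcd_mul_lcm x.2 q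
    field_simp
    linarith
  split_ifs
  · rw [mul_assoc, mul_inv_lcm, zsmul_eq_mul, mul_left_comm]
  · simp

lemma hasMeanValue_ramanujanSum_of_dvd_add {q ℓ : ℕ} (hq : 0 < q) (hℓ : 0 < ℓ) (n : ℕ) :
    HasMeanValue (fun h => if q ∣ n + h then (ramanujanSum ℓ h : ℝ) else 0)
      (if ℓ ∣ q then (q : ℝ)⁻¹ * ramanujanSum ℓ n else 0) := by
  rw [← sum_moebius_mul_inv_lcm hq hℓ]
  have mean := HasMeanValue.sum fun x (hx : x ∈ ℓ.divisorsAntidiagonal) =>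
    (hasMeanValue_dvd_add_and_dvd (Nat.pos_of_mem_divisors
      (Nat.snd_mem_divisors_of_mem_antidiagonal hx)) hq n).const_mul (μ x.1 * x.2 : ℝ)
  refine mean.congr fun h _ => ?_
  simp only [ramanujanSum_eq_sum_divisorsAntidiagonal hℓ, ite_and]
  split_ifs <;> simp

section TruncatedDivisorSum

variable {E : Type*} [AddCommMonoid E] [Module ℝ E]

/-- The Ramanujan coefficient `ĝ(q)`, given by the Eratosthenes transform `g'` of the truncated
divisor sum `g` of range `Q`. -/
noncomputable def ramanujanCoeff (g' : ℕ → E) (Q q : ℕ) : E :=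
  ∑ m ∈ Icc 1 Q with q ∣ m, (m : ℝ)⁻¹ • g' m

lemma divisors_filter_le_eq_Icc_filter_dvd {m : ℕ} (hm : 0 < m) (Q : ℕ) :
    m.divisors.filter (· ≤ Q) = {q ∈ Icc 1 Q | q ∣ m} := by
  ext q
  simp only [mem_filter, Nat.mem_divisors, mem_Icc]
  exact ⟨fun ⟨⟨hqm, _⟩, hqQ⟩ => ⟨⟨Nat.pos_of_dvd_of_pos hqm hm, hqQ⟩, hqm⟩,
    fun ⟨⟨_, hqQ⟩, hqm⟩ => ⟨⟨hqm, hm.ne'⟩, hqQ⟩⟩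

lemma hasMeanValue_ramanujanSum_smul_shift [TopologicalSpace E] [ContinuousAdd E]
    [ContinuousSMul ℝ E] {Q : ℕ} {g g' : ℕ → E}
    (hg : ∀ m : ℕ, 0 < m → g m = ∑ q ∈ m.divisors.filter (· ≤ Q), g' q)
    {ℓ : ℕ} (hℓ : 0 < ℓ) (n : ℕ) :
    HasMeanValue (fun h => (ramanujanSum ℓ h : ℝ) • g (n + h))
      ((ramanujanSum ℓ n : ℝ) • ramanujanCoeff g' Q ℓ) := by
  have mean := HasMeanValue.sum fun q (hq : q ∈ Icc 1 Q) =>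
    (hasMeanValue_ramanujanSum_of_dvd_add (mem_Icc.1 hq).1 hℓ n).smul_const (g' q)
  have sum_mean : ∑ q ∈ Icc 1 Q, (if ℓ ∣ q then (q : ℝ)⁻¹ * ramanujanSum ℓ n else 0) • g' q =
      (ramanujanSum ℓ n : ℝ) • ramanujanCoeff g' Q ℓ := by
    simp only [ramanujanCoeff, smul_sum, sum_filter, ite_smul, zero_smul, smul_ite,
      smul_zero, smul_smul, mul_comm]
  rw [← sum_mean]
  refine mean.congr fun h hh => ?_
  rw [hg (n + h) (by positivity), divisors_filter_le_eq_Icc_filter_dvd (by positivity), smul_sum,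
    sum_filter]
  simp only [ite_smul, zero_smul]

end TruncatedDivisorSum

/-- The correlation (shifted convolution sum) `C_{f,g}(N,h)` of `f` and `g` with shift `h`. -/
def correlation {A : Type*} [Semiring A] (f g : ℕ → A) (N h : ℕ) : A :=
  ∑ n ∈ Icc 1 N, f n * g (n + h)

theorem correlation_shift_coefficient_limit_general
    {A : Type*} [Ring A] [Algebra ℝ A] [TopologicalSpace A]
    [ContinuousAdd A] [SeparatelyContinuousMul A] [ContinuousSMul ℝ A]
    (N Q : ℕ) (f g g' : ℕ → A)
    (hg : ∀ m : ℕ, 0 < m → g m = ∑ q ∈ m.divisors.filter (· ≤ Q), g' q)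
    (ℓ : ℕ) (hℓ : 0 < ℓ) :
    HasMeanValue (fun h => correlation f g N h * (ramanujanSum ℓ h : A))
      ((∑ n ∈ Icc 1 N, f n * (ramanujanSum ℓ n : A)) * ramanujanCoeff g' Q ℓ) := by
  have mean := HasMeanValue.sum fun n (_ : n ∈ Icc 1 N) =>
    (hasMeanValue_ramanujanSum_smul_shift hg hℓ n).const_mul (f n)
  convert mean using 1
  · ext h
    simp only [correlation, sum_mul, mul_assoc, Int.cast_smul_eq_zsmul, zsmul_eq_mul']
  · simp only [sum_mul, mul_assoc, Int.cast_smul_eq_zsmul, zsmul_eq_mul]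

/-- let `N` be a positive integer, `f : ℕ → ℂ` arbitrary and
`g` a truncated divisor sum `g(m) = ∑_{q ∣ m, q ≤ Q} g'(q)` of range `Q`.
Then for every positive integer `ℓ` the limit
`lim_{x→∞} (1/x) ∑_{h ≤ x} C_{f,g}(N,h) c_ℓ(h)` exists and equals
`ĝ(ℓ) ∑_{n ≤ N} f(n) c_ℓ(n)`, where `C_{f,g}(N,h) = ∑_{n ≤ N} f(n) g(n+h)`
and `ĝ(ℓ) = ∑_{m ≤ Q, ℓ ∣ m} g'(m)/m`. -/
theorem correlation_shift_coefficient_limit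
    (N Q : ℕ) (hN : 0 < N) (hQ : 0 < Q)
    (f g g' : ℕ → ℂ)
    (hg : ∀ m : ℕ, 0 < m → g m = ∑ q ∈ m.divisors.filter (· ≤ Q), g' q)
    (ℓ : ℕ) (hℓ : 0 < ℓ) :
    Filter.Tendsto
      (fun x : ℕ => (1 / (x : ℂ)) *
        ∑ h ∈ Finset.Icc 1 x,
          (∑ n ∈ Finset.Icc 1 N, f n * g (n + h)) * (ramanujanSum ℓ (h : ℤ) : ℂ))
      Filter.atTop
      (nhds ((∑ m ∈ (Finset.Icc 1 Q).filter (ℓ ∣ ·), g' m / (m : ℂ)) *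
        ∑ n ∈ Finset.Icc 1 N, f n * (ramanujanSum ℓ (n : ℤ) : ℂ))) := by
  simpa [HasMeanValue, correlation, ramanujanCoeff, div_eq_inv_mul, mul_comm] using
    correlation_shift_coefficient_limit_general N Q f g g' hg ℓ hℓ
end

section
/- Let f be a sieve function of range D ≪ N, let t be a positive integer all of whose prime factors exceed G (i.e. gcd(t, P(G)) = 1), and let h be an integer with 0 < |h| ≤ G. Then Σ_{n ≤ N, n ≡ −h (mod t)} f(n) = (N/t)·𝑓̂(1) + O_ε(D^ε·(N·t^ε/(tG) + D)) for every ε > 0, uniformly in such h. -/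
/-!
Interchanging the summations, the sum over the progression is `∑_{d ≤ D} f' d * k_d`, where `k_d`
counts the multiples of `d` up to `N` in the given class modulo `t`. If `d` is coprime to `t`, the
Chinese remainder theorem gives `k_d = N / (d t) + O(1)`; otherwise `k_d = 0`, because the class is
coprime to `t`. The error is therefore the `O(1)` for each `d ≤ D`, together with the main terms
`N / (d t)` of the `d` that share a prime `p` with `t`. For a fixed `p` the sum of `1 / d` over such
`d` is at most `(1 + log D) / p`; since `p > G` and `t` has `O(t ^ ε)` prime factors, this yields
`N t ^ ε / (t G)` up to a power of `D`.
-/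

/-- `P(G)`: the product of all primes `p ≤ G`. -/
def primesProd (G : ℕ) : ℕ := ∏ p ∈ (Finset.Icc 1 G).filter Nat.Prime, p

section

open Finset

/-- The multiples of `d` among `1, …, N` that lie in the residue class of `a` modulo `t`. Their
number is the weight of `f' d` in the sum over the class of a sieve function. -/
def multiplesInClass (N d t : ℕ) (a : ℤ) : Finset ℕ :=
  {n ∈ Icc 1 N | (n : ℤ) ≡ a [ZMOD t] ∧ d ∣ n}

/-- The sieve function of range `D` with Eratosthenes transform `f'`, that is
`f n = ∑_{d ∣ n, d ≤ D} f' d`. It vanishes at `n = 0`, because `Nat.divisors 0` is empty. -/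
def sieveFunction {M : Type*} [AddCommMonoid M] (f' : ℕ → M) (D n : ℕ) : M :=
  ∑ d ∈ n.divisors.filter (· ≤ D), f' d

lemma sieveFunction_eq_sum_Icc {M : Type*} [AddCommMonoid M] (f' : ℕ → M) (D : ℕ) {n : ℕ}
    (hn : n ≠ 0) : sieveFunction f' D n = ∑ d ∈ Icc 1 D, if d ∣ n then f' d else 0 := by
  rw [sieveFunction, ← sum_filter]
  congr 1
  ext d
  simp only [mem_filter, Nat.mem_divisors, mem_Icc]
  constructor
  · rintro ⟨⟨hdn, -⟩, hdD⟩
    exact ⟨⟨Nat.pos_of_dvd_of_pos hdn (Nat.pos_of_ne_zero hn), hdD⟩, hdn⟩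
  · rintro ⟨⟨-, hdD⟩, hdn⟩
    exact ⟨⟨hdn, hn⟩, hdD⟩

lemma sum_sieveFunction_modEq {M : Type*} [AddCommMonoid M] (f' : ℕ → M) (N D t : ℕ) (a : ℤ) :
    (∑ n ∈ Icc 1 N, if (n : ℤ) ≡ a [ZMOD t] then sieveFunction f' D n else 0) =
      ∑ d ∈ Icc 1 D, #(multiplesInClass N d t a) • f' d := by
  calc
    _ = ∑ n ∈ Icc 1 N, ∑ d ∈ Icc 1 D, if (n : ℤ) ≡ a [ZMOD t] ∧ d ∣ n then f' d else 0 := by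
      refine sum_congr rfl fun n hn => ?_
      rw [sieveFunction_eq_sum_Icc f' D (Nat.one_le_iff_ne_zero.1 (mem_Icc.1 hn).1)]
      simp only [ite_and, sum_ite_irrel, sum_const_zero]
    _ = ∑ d ∈ Icc 1 D, #(multiplesInClass N d t a) • f' d := by
      rw [sum_comm]
      simp only [multiplesInClass, ← sum_filter, sum_const]

lemma abs_card_Ioc_filter_modEq_sub_le {M N r : ℕ} (hr : 0 < r) (hMN : M ≤ N) (v : ℕ) :
    |(#{n ∈ Ioc M N | n ≡ v [MOD r]} : ℝ) - ((N : ℝ) - M) / r| ≤ 1 := by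
  set x : ℚ := (N - v) / r with hx
  set y : ℚ := (M - v) / r with hy
  have hyx : y ≤ x := by rw [hx, hy]; gcongr
  have hcard : (#{n ∈ Ioc M N | n ≡ v [MOD r]} : ℚ) = ⌊x⌋ - ⌊y⌋ := by
    have hfloor := Nat.Ioc_filter_modEq_card M N hr v
    rw [max_eq_left (sub_nonneg.2 (Int.floor_le_floor hyx))] at hfloor
    exact_mod_cast hfloor
  have hlen : ((N : ℚ) - M) / r = x - y := by rw [hx, hy]; ring
  have hrat : |(#{n ∈ Ioc M N | n ≡ v [MOD r]} : ℚ) - ((N : ℚ) - M) / r| ≤ 1 := by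
    rw [hcard, hlen, abs_le]
    constructor <;>
      linarith [Int.floor_le x, Int.lt_floor_add_one x, Int.floor_le y, Int.lt_floor_add_one y]
  have hreal := (Rat.cast_le (K := ℝ)).2 hrat
  push_cast at hreal
  exact hreal

lemma exists_modEq_and_dvd_iff_modEq_mul {d t : ℕ} (ht : 0 < t) (hdt : d.Coprime t) (a : ℤ) :
    ∃ v : ℕ, ∀ n : ℕ, (n : ℤ) ≡ a [ZMOD t] ∧ d ∣ n ↔ n ≡ v [MOD d * t] := by
  obtain ⟨b, -, hba⟩ := Int.existsUnique_equiv_nat a (Int.natCast_pos.2 ht)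
  obtain ⟨v, hvd, hvt⟩ := Nat.chineseRemainder hdt 0 b
  have hva : (v : ℤ) ≡ a [ZMOD t] := (Int.natCast_modEq_iff.2 hvt).trans hba
  refine ⟨v, fun n => ?_⟩
  rw [← Nat.modEq_and_modEq_iff_modEq_mul hdt, ← Nat.modEq_zero_iff_dvd,
    ← Int.natCast_modEq_iff (n := t), and_comm]
  exact and_congr ⟨(·.trans hvd.symm), (·.trans hvd)⟩ ⟨(·.trans hva.symm), (·.trans hva)⟩

lemma abs_card_multiplesInClass_sub_le_one {d t : ℕ} (hd : 0 < d) (ht : 0 < t)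
    (hdt : d.Coprime t) (N : ℕ) (a : ℤ) :
    |(#(multiplesInClass N d t a) : ℝ) - N / (d * t)| ≤ 1 := by
  obtain ⟨v, hv⟩ := exists_modEq_and_dvd_iff_modEq_mul ht hdt a
  have hset : multiplesInClass N d t a = {n ∈ Ioc 0 N | n ≡ v [MOD d * t]} :=
    filter_congr fun n _ => hv n
  simpa [hset] using abs_card_Ioc_filter_modEq_sub_le (mul_pos hd ht) (Nat.zero_le N) v

lemma multiplesInClass_eq_empty {d t : ℕ} {a : ℤ} (ha : IsCoprime a t) (hdt : ¬ d.Coprime t)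
    (N : ℕ) : multiplesInClass N d t a = ∅ := by
  refine filter_eq_empty_iff.2 fun n _ ⟨hna, hdn⟩ => hdt ?_
  obtain ⟨k, hk⟩ := hna.dvd
  rw [eq_add_of_sub_eq' hk, IsCoprime.add_mul_left_left_iff, Nat.isCoprime_iff_coprime] at ha
  exact ha.coprime_dvd_left hdn

lemma abs_card_multiplesInClass_sub_le {d t : ℕ} {a : ℤ} (hd : 0 < d) (ht : 0 < t)
    (ha : IsCoprime a t) (N : ℕ) :
    |(#(multiplesInClass N d t a) : ℝ) - N / (d * t)| ≤
      1 + (N : ℝ) / t * if ¬ d.Coprime t then 1 / (d : ℝ) else 0 := by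
  by_cases hdt : d.Coprime t
  · simpa [hdt] using abs_card_multiplesInClass_sub_le_one hd ht hdt N a
  · have hmain : (N : ℝ) / (d * t) = N / t * (1 / d) := by ring
    rw [multiplesInClass_eq_empty ha hdt, if_pos hdt, card_empty, Nat.cast_zero, zero_sub,
      abs_neg, hmain, abs_of_nonneg (by positivity)]
    exact le_add_of_nonneg_left zero_le_one

theorem norm_sum_sieveFunction_modEq_sub_le {𝕜 : Type*} [RCLike 𝕜] {f' : ℕ → 𝕜} {D t : ℕ}
    {a : ℤ} {B : ℝ} (hf' : ∀ d ∈ Icc 1 D, ‖f' d‖ ≤ B) (ht : 0 < t) (ha : IsCoprime a t) (N : ℕ) :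
    ‖(∑ n ∈ Icc 1 N, if (n : ℤ) ≡ a [ZMOD t] then sieveFunction f' D n else 0) -
        (N : 𝕜) / t * ∑ m ∈ Icc 1 D, f' m / m‖ ≤
      B * (D + (N : ℝ) / t * ∑ d ∈ Icc 1 D with ¬ d.Coprime t, 1 / (d : ℝ)) := by
  have hterm : ∀ d ∈ Icc 1 D,
      ‖#(multiplesInClass N d t a) • f' d - (N : 𝕜) / t * (f' d / d)‖ ≤
        B * (1 + (N : ℝ) / t * if ¬ d.Coprime t then 1 / (d : ℝ) else 0) := by
    intro d hd
    have hfactor : #(multiplesInClass N d t a) • f' d - (N : 𝕜) / t * (f' d / d) =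
        f' d * ((#(multiplesInClass N d t a) - N / (d * t) : ℝ) : 𝕜) := by
      push_cast
      rw [nsmul_eq_mul]
      ring
    rw [hfactor, norm_mul, RCLike.norm_ofReal]
    exact mul_le_mul (hf' d hd) (abs_card_multiplesInClass_sub_le (mem_Icc.1 hd).1 ht ha N)
      (abs_nonneg _) ((norm_nonneg _).trans (hf' d hd))
  rw [sum_sieveFunction_modEq, mul_sum, ← sum_sub_distrib]
  refine (norm_sum_le_of_le _ hterm).trans_eq ?_
  rw [← mul_sum, sum_add_distrib, ← mul_sum, ← sum_filter]
  simp

lemma sum_Icc_one_div_of_dvd_le {p : ℕ} (hp : 0 < p) (D : ℕ) :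
    ∑ d ∈ Icc 1 D with p ∣ d, 1 / (d : ℝ) ≤ (1 + Real.log D) / p := by
  have hsub : {d ∈ Icc 1 D | p ∣ d} ⊆ (Icc 1 D).image (p * ·) := by
    intro d hd
    simp only [mem_filter, mem_Icc] at hd
    obtain ⟨⟨hpos, hle⟩, k, rfl⟩ := hd
    exact mem_image_of_mem _
      (mem_Icc.2 ⟨Nat.pos_of_mul_pos_left hpos, (Nat.le_mul_of_pos_left k hp).trans hle⟩)
  calc
    _ ≤ ∑ d ∈ (Icc 1 D).image (p * ·), 1 / (d : ℝ) :=
      sum_le_sum_of_subset_of_nonneg hsub fun _ _ _ => by positivity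
    _ = ∑ k ∈ Icc 1 D, 1 / ((p * k : ℕ) : ℝ) :=
      sum_image fun _ _ _ _ hkl => Nat.eq_of_mul_eq_mul_left hp hkl
    _ = (harmonic D : ℝ) / p := by
      rw [harmonic_eq_sum_Icc]
      push_cast
      rw [sum_div]
      exact sum_congr rfl fun k _ => by ring
    _ ≤ (1 + Real.log D) / p := by
      gcongr
      exact harmonic_le_one_add_log D

lemma sum_Icc_one_div_of_not_coprime_le {t : ℕ} {G : ℝ} (ht : t ≠ 0) (hG : 0 < G)
    (htG : ∀ p ∈ t.primeFactors, G ≤ p) (D : ℕ) :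
    ∑ d ∈ Icc 1 D with ¬ d.Coprime t, 1 / (d : ℝ) ≤ #t.primeFactors * ((1 + Real.log D) / G) := by
  have hcover : ∀ d ∈ Icc 1 D, (if ¬ d.Coprime t then 1 / (d : ℝ) else 0) ≤
      ∑ p ∈ t.primeFactors, if p ∣ d then 1 / (d : ℝ) else 0 := by
    intro d _
    have hnonneg : ∀ p ∈ t.primeFactors, 0 ≤ if p ∣ d then 1 / (d : ℝ) else 0 :=
      fun p _ => by positivity
    split_ifs with hdt
    · exact sum_nonneg hnonneg
    · obtain ⟨p, hp, hpd, hpt⟩ := Nat.Prime.not_coprime_iff_dvd.1 hdt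
      simpa [hpd] using single_le_sum hnonneg (Nat.mem_primeFactors.2 ⟨hp, hpt, ht⟩)
  calc
    _ ≤ ∑ d ∈ Icc 1 D, ∑ p ∈ t.primeFactors, if p ∣ d then 1 / (d : ℝ) else 0 := by
      rw [sum_filter]
      exact sum_le_sum hcover
    _ = ∑ p ∈ t.primeFactors, ∑ d ∈ Icc 1 D with p ∣ d, 1 / (d : ℝ) := by
      rw [sum_comm]
      simp only [sum_filter]
    _ ≤ #t.primeFactors • ((1 + Real.log D) / G) := by
      refine sum_le_card_nsmul _ _ _ fun p hp => ?_
      have hGp : G ≤ p := htG p hp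
      exact (sum_Icc_one_div_of_dvd_le (Nat.pos_of_mem_primeFactors hp) D).trans (by gcongr)
    _ = #t.primeFactors * ((1 + Real.log D) / G) := nsmul_eq_mul _ _

lemma card_primeFactors_le_rpow_div {ε : ℝ} (hε : 0 < ε) {t : ℕ} (ht : t ≠ 0) :
    (#t.primeFactors : ℝ) ≤ (t : ℝ) ^ ε / (ε * Real.log 2) := by
  have hpow : (2 : ℝ) ^ #t.primeFactors ≤ t := by
    have hprod : 2 ^ #t.primeFactors ≤ ∏ p ∈ t.primeFactors, p :=
      pow_card_le_prod _ _ _ fun p hp => (Nat.prime_of_mem_primeFactors hp).two_le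
    exact_mod_cast hprod.trans
      (Nat.le_of_dvd (Nat.pos_of_ne_zero ht) (Nat.prod_primeFactors_dvd t))
  have hlog2 : 0 < Real.log 2 := Real.log_pos one_lt_two
  rw [← div_div, le_div_iff₀ hlog2, ← Real.log_pow]
  exact (Real.log_le_log (by positivity) hpow).trans (Real.log_le_rpow_div t.cast_nonneg hε)

lemma one_add_log_le_mul_rpow {η x : ℝ} (hη : 0 < η) (hx : 1 ≤ x) :
    1 + Real.log x ≤ (1 + 1 / η) * x ^ η := by
  calc
    1 + Real.log x ≤ x ^ η + x ^ η / η :=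
      add_le_add (Real.one_le_rpow hx hη.le) (Real.log_le_rpow_div (zero_le_one.trans hx) hη)
    _ = (1 + 1 / η) * x ^ η := by ring

lemma sum_Icc_one_div_of_not_coprime_le_rpow {D t : ℕ} {G ε η : ℝ} (hD : 0 < D) (ht : t ≠ 0)
    (hG : 0 < G) (htG : ∀ p ∈ t.primeFactors, G ≤ p) (hε : 0 < ε) (hη : 0 < η) :
    ∑ d ∈ Icc 1 D with ¬ d.Coprime t, 1 / (d : ℝ) ≤
      (1 + 1 / η) / (ε * Real.log 2) * ((t : ℝ) ^ ε * (D : ℝ) ^ η / G) := by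
  calc
    _ ≤ #t.primeFactors * ((1 + Real.log D) / G) :=
      sum_Icc_one_div_of_not_coprime_le ht hG htG D
    _ ≤ (t : ℝ) ^ ε / (ε * Real.log 2) * ((1 + 1 / η) * (D : ℝ) ^ η / G) := by
      gcongr
      · exact card_primeFactors_le_rpow_div hε ht
      · exact one_add_log_le_mul_rpow hη (by exact_mod_cast hD)
    _ = (1 + 1 / η) / (ε * Real.log 2) * ((t : ℝ) ^ ε * (D : ℝ) ^ η / G) := by ring

lemma lt_of_prime_dvd_of_coprime_primesProd {G t p : ℕ} (ht : t.Coprime (primesProd G))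
    (hp : p.Prime) (hpt : p ∣ t) : G < p := by
  by_contra! hpG
  have hpP : p ∣ primesProd G :=
    dvd_prod_of_mem (fun q => q) (mem_filter.2 ⟨mem_Icc.2 ⟨hp.one_le, hpG⟩, hp⟩)
  exact Nat.not_coprime_of_dvd_of_dvd hp.one_lt hpt hpP ht

lemma isCoprime_of_abs_le_of_coprime_primesProd {G t : ℕ} {h : ℤ}
    (ht : t.Coprime (primesProd G)) (h0 : h ≠ 0) (hG : |h| ≤ G) : IsCoprime h t := by
  refine Int.isCoprime_iff_gcd_eq_one.2 (Nat.coprime_of_dvd fun p hp hph hpt => ?_)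
  have hhG : h.natAbs ≤ G := by
    rw [Int.abs_eq_natAbs] at hG
    exact_mod_cast hG
  have hpG : p ≤ G := (Nat.le_of_dvd (Int.natAbs_pos.2 h0) hph).trans hhG
  exact (lt_of_prime_dvd_of_coprime_primesProd ht hp hpt).not_ge hpG

theorem sifted_modulus_progression_formula_general {𝕜 : Type*} [RCLike 𝕜] {f' : ℕ → 𝕜}
    {c δ ε : ℝ} (hδ : 0 ≤ δ) (hδε : δ < ε) (hf' : ∀ q : ℕ, 1 ≤ q → ‖f' q‖ ≤ c * (q : ℝ) ^ δ)
    {N D t : ℕ} {G : ℝ} {a : ℤ} (hD : 0 < D) (ht : 0 < t) (hG : 0 < G)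
    (htG : ∀ p ∈ t.primeFactors, G ≤ p) (ha : IsCoprime a t) :
    ‖(∑ n ∈ Icc 1 N, if (n : ℤ) ≡ a [ZMOD t] then sieveFunction f' D n else 0) -
        (N : 𝕜) / t * ∑ m ∈ Icc 1 D, f' m / m‖ ≤
      c * (1 + (1 + 1 / (ε - δ)) / (ε * Real.log 2)) * (D : ℝ) ^ ε *
        (N * (t : ℝ) ^ ε / (t * G) + D) := by
  have hε : 0 < ε := hδ.trans_lt hδε
  have hc : 0 ≤ c := by simpa using (norm_nonneg _).trans (hf' 1 le_rfl)
  have hD1 : (1 : ℝ) ≤ D := by exact_mod_cast hD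
  have hf'D : ∀ d ∈ Icc 1 D, ‖f' d‖ ≤ c * (D : ℝ) ^ δ := by
    intro d hd
    obtain ⟨hd1, hdD⟩ := mem_Icc.1 hd
    exact (hf' d hd1).trans (by gcongr)
  have hDδ : (D : ℝ) ^ δ ≤ (D : ℝ) ^ ε := Real.rpow_le_rpow_of_exponent_le hD1 hδε.le
  have hDε : (D : ℝ) ^ δ * (D : ℝ) ^ (ε - δ) = (D : ℝ) ^ ε := by
    rw [← Real.rpow_add (by positivity), add_sub_cancel]
  have hη : 0 < ε - δ := sub_pos.2 hδε
  set K : ℝ := (1 + 1 / (ε - δ)) / (ε * Real.log 2)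
  set X : ℝ := N * (t : ℝ) ^ ε / (t * G) with hX
  have hK0 : 0 ≤ K := by positivity
  have hX0 : 0 ≤ X := by positivity
  calc
    _ ≤ c * (D : ℝ) ^ δ * (D + (N : ℝ) / t * ∑ d ∈ Icc 1 D with ¬ d.Coprime t, 1 / (d : ℝ)) :=
      norm_sum_sieveFunction_modEq_sub_le hf'D ht ha N
    _ ≤ c * (D : ℝ) ^ δ * (D + (N : ℝ) / t * (K * ((t : ℝ) ^ ε * (D : ℝ) ^ (ε - δ) / G))) := by
      gcongr
      exact sum_Icc_one_div_of_not_coprime_le_rpow hD ht.ne' hG htG hε hη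
    _ = c * ((D : ℝ) ^ δ * D + K * ((D : ℝ) ^ δ * (D : ℝ) ^ (ε - δ)) * X) := by
      rw [hX]
      ring
    _ ≤ c * ((D : ℝ) ^ ε * D + K * (D : ℝ) ^ ε * X) := by
      rw [hDε]
      gcongr
    _ = c * (D : ℝ) ^ ε * (D + K * X) := by ring
    _ ≤ c * (D : ℝ) ^ ε * ((1 + K) * (X + D)) := by
      gcongr
      linarith [mul_nonneg hK0 (zero_le_one.trans hD1)]
    _ = c * (1 + K) * (D : ℝ) ^ ε * (X + D) := by ring

end

/-- formula (33): let `f` be a sieve function of range `D ≪ N`,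
i.e. `f(n) = ∑_{d ∣ n, d ≤ D} f'(d)` with `f'` essentially bounded, let `t` be
a positive integer all of whose prime factors exceed `G`
(`gcd(t, P(G)) = 1`), and let `h` be an integer with `0 < |h| ≤ G`.  Then
`∑_{n ≤ N, n ≡ −h (mod t)} f(n) = (N/t) f̂(1) + O_ε(D^ε (N t^ε/(tG) + D))`,
uniformly in such `h`, where `f̂(1) = ∑_{m ≤ D} f'(m)/m`. -/
theorem sifted_modulus_progression_formula
    (f' : ℕ → ℂ)
    (hf' : ∀ ε : ℝ, 0 < ε → ∃ c : ℝ, 0 < c ∧ ∀ q : ℕ, 1 ≤ q → ‖f' q‖ ≤ c * (q : ℝ) ^ ε)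
    (ε : ℝ) (hε : 0 < ε) (A : ℝ) (hA : 0 < A) :
    ∃ C : ℝ, 0 < C ∧ ∀ (N D G t : ℕ) (h : ℤ), 0 < N → 0 < D → 0 < G → 0 < t →
      (D : ℝ) ≤ A * N → Nat.Coprime t (primesProd G) → h ≠ 0 → |h| ≤ (G : ℤ) →
      ‖(∑ n ∈ Finset.Icc 1 N,
            if (n : ℤ) ≡ -h [ZMOD (t : ℤ)] then ∑ d ∈ n.divisors.filter (· ≤ D), f' d else 0)
          - ((N : ℂ) / (t : ℂ)) * ∑ m ∈ Finset.Icc 1 D, f' m / (m : ℂ)‖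
        ≤ C * (D : ℝ) ^ ε * ((N : ℝ) * (t : ℝ) ^ ε / ((t : ℝ) * G) + D) := by
  obtain ⟨c, hc, hf'c⟩ := hf' (ε / 2) (half_pos hε)
  have hsub : 0 < ε - ε / 2 := sub_pos.2 (half_lt_self hε)
  refine ⟨c * (1 + (1 + 1 / (ε - ε / 2)) / (ε * Real.log 2)), by positivity, ?_⟩
  intro N D G t h _ hD hG ht _ htG h0 hhG
  have hprimes : ∀ p ∈ t.primeFactors, (G : ℝ) ≤ p := fun p hp => by
    exact_mod_cast (lt_of_prime_dvd_of_coprime_primesProd htG (Nat.prime_of_mem_primeFactors hp)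
      (Nat.dvd_of_mem_primeFactors hp)).le
  exact sifted_modulus_progression_formula_general (half_pos hε).le (half_lt_self hε) hf'c hD ht
    (Nat.cast_pos.2 hG) hprimes (isCoprime_of_abs_le_of_coprime_primesProd htG h0 hhG).neg_left
end
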